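/- arXiv:1505.02939 — 2 statements merged into one kernel-verified Lean document; each statement's English description precedes it below -/
import Mathlib

section
/- There exists a universal constant K₀ > 0 with the following property. Let L > 1 and M ≥ 0 be real numbers, and let f : ℝ → ℝ be a continuous function with f(y + 2π) = f(y) for all y, |f(y)| ≤ M for all y, and ∫₀^{2π} f(y) dy = 0. Let h : [0,L] × ℝ → ℝ be continuous, satisfy h(x, y + 2π) = h(x, y) for all (x,y), be harmonic on the open strip (0,L) × ℝ, and satisfy the boundary conditions h(0, y) = f(y) and h(L, y) = f(y) for all y ∈ ℝ. Then for every y ∈ ℝ, |h(L/2, y)| ≤ K₀ · M · e^{−L/2}. (The constant K₀ is independent of L, M, f and h.) -/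
open Real MeasureTheory

/-- The Laplacian of a function `u : ℝ × ℝ → ℝ` at a point `p`,
expressed via iterated partial derivatives in each coordinate. -/
noncomputable def laplacian (u : ℝ × ℝ → ℝ) (p : ℝ × ℝ) : ℝ :=
  deriv (fun x => deriv (fun x' => u (x', p.2)) x) p.1 +
  deriv (fun y => deriv (fun y' => u (p.1, y')) y) p.2

/-- A function is harmonic on an open set `U ⊆ ℝ²` if it is twice continuously
differentiable there and satisfies Laplace's equation on `U`. -/
def HarmonicOn (u : ℝ × ℝ → ℝ) (U : Set (ℝ × ℝ)) : Prop :=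
  ContDiffOn ℝ 2 u U ∧ ∀ p ∈ U, laplacian u p = 0

/-!
On the central circle a harmonic function on the flat cylinder `[0, L] × ℝ / Tℤ` only sees the
average of its two boundary values. Its `n`-th Fourier mode `A` along the circles `{x} × ℝ`
satisfies `A'' = (2πn/T)² A`, so the even part of `A` about `L/2` is a multiple of `cosh` and
`A (L/2) = (A 0 + A L) / (2 cosh (πnL/T))`. The mode `n = 0` vanishes because the boundary data have
mean zero, and the other modes sum to a geometric series of ratio `exp (-πL/T)`.
-/

section PartialDerivatives

variable {E : Type*} [NormedAddCommGroup E] [NormedSpace ℝ E] {u : ℝ × ℝ → E} {U : Set (ℝ × ℝ)}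
  {p : ℝ × ℝ} {n : WithTop ℕ∞}

/-- The partial derivative of `u` in the first variable; like `deriv`, it is `0` where that
derivative does not exist. -/
noncomputable def partialFst (u : ℝ × ℝ → E) (p : ℝ × ℝ) : E :=
  deriv (fun x => u (x, p.2)) p.1

/-- The partial derivative of `u` in the second variable; like `deriv`, it is `0` where that
derivative does not exist. -/
noncomputable def partialSnd (u : ℝ × ℝ → E) (p : ℝ × ℝ) : E :=
  deriv (fun y => u (p.1, y)) p.2

lemma laplacian_eq_partialFst_add_partialSnd (u : ℝ × ℝ → ℝ) (p : ℝ × ℝ) :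
    laplacian u p = partialFst (partialFst u) p + partialSnd (partialSnd u) p :=
  rfl

lemma hasDerivAt_fst_fderiv (hu : DifferentiableAt ℝ u p) :
    HasDerivAt (fun x => u (x, p.2)) (fderiv ℝ u p (1, 0)) p.1 :=
  hu.hasFDerivAt.comp_hasDerivAt p.1 ((hasDerivAt_id p.1).prodMk (hasDerivAt_const p.1 p.2))

lemma hasDerivAt_snd_fderiv (hu : DifferentiableAt ℝ u p) :
    HasDerivAt (fun y => u (p.1, y)) (fderiv ℝ u p (0, 1)) p.2 :=
  hu.hasFDerivAt.comp_hasDerivAt p.2 ((hasDerivAt_const p.2 p.1).prodMk (hasDerivAt_id p.2))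

lemma hasDerivAt_partialFst (hu : DifferentiableAt ℝ u p) :
    HasDerivAt (fun x => u (x, p.2)) (partialFst u p) p.1 :=
  (hasDerivAt_fst_fderiv hu).differentiableAt.hasDerivAt

lemma hasDerivAt_partialSnd (hu : DifferentiableAt ℝ u p) :
    HasDerivAt (fun y => u (p.1, y)) (partialSnd u p) p.2 :=
  (hasDerivAt_snd_fderiv hu).differentiableAt.hasDerivAt

lemma contDiffOn_partialFst (hU : IsOpen U) (hu : ContDiffOn ℝ (n + 1) u U) :
    ContDiffOn ℝ n (partialFst u) U :=
  ((hu.fderiv_of_isOpen hU le_rfl).clm_apply contDiffOn_const).congr fun _ hp =>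
    (hasDerivAt_fst_fderiv <| (hu.contDiffAt (hU.mem_nhds hp)).differentiableAt (by simp)).deriv

lemma contDiffOn_partialSnd (hU : IsOpen U) (hu : ContDiffOn ℝ (n + 1) u U) :
    ContDiffOn ℝ n (partialSnd u) U :=
  ((hu.fderiv_of_isOpen hU le_rfl).clm_apply contDiffOn_const).congr fun _ hp =>
    (hasDerivAt_snd_fderiv <| (hu.contDiffAt (hU.mem_nhds hp)).differentiableAt (by simp)).deriv

lemma partialSnd_add_period {T x : ℝ} (hu : ∀ y, u (x, y + T) = u (x, y)) (y : ℝ) :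
    partialSnd u (x, y + T) = partialSnd u (x, y) := by
  simp only [partialSnd, ← deriv_comp_add_const, hu]

end PartialDerivatives

section ParametricIntegral

lemma continuous_slice_of_continuousOn_prod {X Y Z : Type*} [TopologicalSpace X]
    [TopologicalSpace Y] [TopologicalSpace Z] {s : Set X} {F : X × Y → Z}
    (hF : ContinuousOn F (s ×ˢ Set.univ)) {x : X} (hx : x ∈ s) : Continuous fun y => F (x, y) :=
  hF.comp_continuous (by fun_prop) fun _ => ⟨hx, trivial⟩

variable {E : Type*} [NormedAddCommGroup E] [NormedSpace ℝ E] {a b : ℝ}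

lemma continuousOn_intervalIntegral_of_continuousOn_prod {X : Type*} [TopologicalSpace X]
    {s : Set X} {F : X × ℝ → E} (hF : ContinuousOn F (s ×ˢ Set.univ)) :
    ContinuousOn (fun x => ∫ y in a..b, F (x, y)) s := by
  rw [continuousOn_iff_continuous_domRestrict]
  refine intervalIntegral.continuous_parametric_intervalIntegral_of_continuous'
    (f := fun (x : s) y => F (x, y)) ?_ a b
  exact hF.comp_continuous (by fun_prop) fun p => ⟨p.1.2, trivial⟩

lemma hasDerivAt_intervalIntegral_of_continuousOn_prod {s : Set ℝ} (hs : IsOpen s)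
    {F F' : ℝ × ℝ → E} (hF : ContinuousOn F (s ×ˢ Set.univ))
    (hF' : ContinuousOn F' (s ×ˢ Set.univ))
    (hderiv : ∀ x ∈ s, ∀ y, HasDerivAt (fun x => F (x, y)) (F' (x, y)) x) {x₀ : ℝ} (hx₀ : x₀ ∈ s) :
    HasDerivAt (fun x => ∫ y in a..b, F (x, y)) (∫ y in a..b, F' (x₀, y)) x₀ := by
  obtain ⟨K, hK, hKs, hKc⟩ := local_compact_nhds (hs.mem_nhds hx₀)
  obtain ⟨C, hC⟩ := (hKc.prod isCompact_uIcc).exists_bound_of_continuousOn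
    (hF'.mono (Set.prod_mono hKs (Set.subset_univ (Set.uIcc a b))))
  refine (intervalIntegral.hasDerivAt_integral_of_dominated_loc_of_deriv_le
    (F := fun x y => F (x, y)) (F' := fun x y => F' (x, y)) (bound := fun _ => C)
    hK ?_ ?_ ?_ ?_ intervalIntegrable_const ?_).2
  · filter_upwards [hs.mem_nhds hx₀] with x hx
    exact (continuous_slice_of_continuousOn_prod hF hx).aestronglyMeasurable
  · exact (continuous_slice_of_continuousOn_prod hF hx₀).intervalIntegrable _ _
  · exact (continuous_slice_of_continuousOn_prod hF' hx₀).aestronglyMeasurable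
  · exact .of_forall fun y hy x hx => hC (x, y) ⟨hx, Set.uIoc_subset_uIcc hy⟩
  · exact .of_forall fun y _ x hx => hderiv x (hKs hx) y

end ParametricIntegral

section FourierCoefficients

variable {E : Type*} [NormedAddCommGroup E] [NormedSpace ℂ E] {a b : ℝ} (hab : a < b)

lemma continuous_fourier_coe (T : ℝ) (n : ℤ) :
    Continuous fun y : ℝ => fourier n (y : AddCircle T) :=
  (map_continuous (fourier n)).comp (AddCircle.continuous_mk' T)

lemma norm_fourier_apply {T : ℝ} (n : ℤ) (y : AddCircle T) : ‖fourier n y‖ = 1 :=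
  Circle.norm_coe _

lemma norm_fourierCoeffOn_le {f : ℝ → E} {C : ℝ} (hf : ∀ y ∈ Set.Ioc a b, ‖f y‖ ≤ C) (n : ℤ) :
    ‖fourierCoeffOn hab f n‖ ≤ C := by
  have hba : 0 < b - a := sub_pos.2 hab
  have hint : ‖∫ y in a..b, fourier (-n) (y : AddCircle (b - a)) • f y‖ ≤ C * |b - a| :=
    intervalIntegral.norm_integral_le_of_norm_le_const fun y hy => by
      rw [norm_smul, norm_fourier_apply, one_mul]
      exact hf y (Set.uIoc_of_le hab.le ▸ hy)
  rw [abs_of_pos hba] at hint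
  rwa [fourierCoeffOn_eq_integral, norm_smul, Real.norm_of_nonneg (by positivity), one_div,
    inv_mul_le_iff₀ hba, mul_comm]

lemma fourierCoeffOn_zero_eq_integral (f : ℝ → E) :
    fourierCoeffOn hab f 0 = (1 / (b - a)) • ∫ y in a..b, f y := by
  simp only [fourierCoeffOn_eq_integral, neg_zero, fourier_zero, one_smul]

lemma fourierCoeffOn_add {f g : ℝ → E} (hf : IntervalIntegrable f volume a b)
    (hg : IntervalIntegrable g volume a b) (n : ℤ) :
    fourierCoeffOn hab (fun y => f y + g y) n =
      fourierCoeffOn hab f n + fourierCoeffOn hab g n := by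
  have hcont := (continuous_fourier_coe (b - a) (-n)).continuousOn (s := Set.uIcc a b)
  simp only [fourierCoeffOn_eq_integral, smul_add]
  rw [intervalIntegral.integral_add (hf.continuousOn_smul hcont) (hg.continuousOn_smul hcont),
    smul_add]

lemma fourierCoeffOn_deriv_of_eq_endpoints {f f' : ℝ → ℂ}
    (hf : ∀ y ∈ Set.uIcc a b, HasDerivAt f (f' y) y) (hf' : IntervalIntegrable f' volume a b)
    (hends : f b = f a) (n : ℤ) :
    fourierCoeffOn hab f' n = 2 * π * Complex.I * n / (b - a) * fourierCoeffOn hab f n := by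
  have hba : (b - a : ℂ) ≠ 0 := by exact_mod_cast (sub_pos.2 hab).ne'
  rcases eq_or_ne n 0 with rfl | hn
  · simp [fourierCoeffOn_zero_eq_integral, intervalIntegral.integral_eq_sub_of_hasDerivAt hf hf',
      hends]
  · have hπ : (π : ℂ) ≠ 0 := by exact_mod_cast pi_ne_zero
    rw [fourierCoeffOn_of_hasDerivAt hab hn hf hf', hends]
    field_simp
    ring

lemma continuousOn_fourierCoeffOn {X : Type*} [TopologicalSpace X] {s : Set X} {F : X × ℝ → E}
    (hF : ContinuousOn F (s ×ˢ Set.univ)) (n : ℤ) :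
    ContinuousOn (fun x => fourierCoeffOn hab (fun y => F (x, y)) n) s := by
  simp only [fourierCoeffOn_eq_integral]
  exact (continuousOn_intervalIntegral_of_continuousOn_prod <|
    ((continuous_fourier_coe _ (-n)).comp continuous_snd).continuousOn.smul hF).const_smul _

lemma hasDerivAt_fourierCoeffOn {s : Set ℝ} (hs : IsOpen s) {F F' : ℝ × ℝ → E}
    (hF : ContinuousOn F (s ×ˢ Set.univ)) (hF' : ContinuousOn F' (s ×ˢ Set.univ))
    (hderiv : ∀ x ∈ s, ∀ y, HasDerivAt (fun x => F (x, y)) (F' (x, y)) x) (n : ℤ)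
    {x₀ : ℝ} (hx₀ : x₀ ∈ s) :
    HasDerivAt (fun x => fourierCoeffOn hab (fun y => F (x, y)) n)
      (fourierCoeffOn hab (fun y => F' (x₀, y)) n) x₀ := by
  have hcont := ((continuous_fourier_coe (b - a) (-n)).comp continuous_snd).continuousOn
    (s := s ×ˢ Set.univ)
  simp only [fourierCoeffOn_eq_integral]
  exact (hasDerivAt_intervalIntegral_of_continuousOn_prod hs (hcont.smul hF) (hcont.smul hF')
    (fun x hx y => (hderiv x hx y).const_smul (fourier (-n) (y : AddCircle (b - a))))
    hx₀).const_smul _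

lemma norm_le_of_norm_fourierCoeffOn_le {g : ℝ → ℂ} (hg : Continuous g)
    (hper : g.Periodic (b - a)) {c : ℤ → ℝ} {C : ℝ} (hc : HasSum c C)
    (hgc : ∀ n, ‖fourierCoeffOn hab g n‖ ≤ c n) (y : ℝ) : ‖g y‖ ≤ C := by
  have : Fact (0 < b - a) := ⟨sub_pos.2 hab⟩
  let G : C(AddCircle (b - a), ℂ) := ⟨hper.lift, continuous_coinduced_dom.mpr hg⟩
  have hG : ∀ n, fourierCoeff G n = fourierCoeffOn hab g n := fun n => by
    rw [fourierCoeff_eq_intervalIntegral G n a, fourierCoeffOn_eq_integral, add_sub_cancel]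
    rfl
  have hsum : HasSum (fun n => fourierCoeff G n • fourier n (y : AddCircle (b - a))) (g y) :=
    has_pointwise_sum_fourier_series_of_summable
      (hc.summable.of_norm_bounded fun n => hG n ▸ hgc n) y
  rw [← hsum.tsum_eq]
  refine tsum_of_norm_bounded hc fun n => ?_
  rw [norm_smul, norm_fourier_apply, mul_one, hG]
  exact hgc n

end FourierCoefficients

section HyperbolicODE

variable {E : Type*} [NormedAddCommGroup E] [NormedSpace ℝ E]

lemma eqOn_cosh_smul_of_hasDerivAt {u u' : ℝ → E} {ν r : ℝ}
    (hu : ∀ t ∈ Set.Ioo (-r) r, HasDerivAt u (u' t) t)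
    (hu' : ∀ t ∈ Set.Ioo (-r) r, HasDerivAt u' (ν ^ 2 • u t) t) (h0 : u' 0 = 0) :
    Set.EqOn u (fun t => cosh (ν * t) • u 0) (Set.Ioo (-r) r) := by
  intro t ht
  have hr : 0 < r := by linarith [ht.1, ht.2]
  let v : E × E →L[ℝ] E × E :=
    (ContinuousLinearMap.snd ℝ E E).prod (ν ^ 2 • ContinuousLinearMap.fst ℝ E E)
  have hlin (s : ℝ) : HasDerivAt (fun s => ν * s) ν s := hasDerivAt_const_mul ν
  have hcosh (s : ℝ) : HasDerivAt
      (fun s => (cosh (ν * s) • u 0, (ν * sinh (ν * s)) • u 0))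
      (v (cosh (ν * s) • u 0, (ν * sinh (ν * s)) • u 0)) s := by
    refine (((hlin s).cosh.smul_const (u 0)).prodMk
      (((hlin s).sinh.const_mul ν).smul_const (u 0))).congr_deriv ?_
    simp only [v, ContinuousLinearMap.prod_apply, ContinuousLinearMap.coe_snd',
      smul_apply, ContinuousLinearMap.coe_fst', smul_smul]
    ring_nf
  have huniq : Set.EqOn (fun s => (u s, u' s)) _ (Set.Ioo (-r) r) :=
    ODE_solution_unique_of_mem_Ioo (v := fun _ => v) (s := fun _ => Set.univ) (t₀ := 0)
      (fun _ _ => v.lipschitz.lipschitzOnWith) ⟨neg_lt_zero.2 hr, hr⟩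
      (fun s hs => ⟨(hu s hs).prodMk (hu' s hs), trivial⟩) (fun s _ => ⟨hcosh s, trivial⟩)
      (by simp [h0])
  exact congrArg Prod.fst (huniq ht)

lemma add_eq_two_mul_cosh_smul_of_hasDerivAt {A A' : ℝ → E} {ν c r : ℝ} (hr : 0 < r)
    (hA : ContinuousOn A (Set.Icc (c - r) (c + r)))
    (hA' : ∀ x ∈ Set.Ioo (c - r) (c + r), HasDerivAt A (A' x) x)
    (hA'' : ∀ x ∈ Set.Ioo (c - r) (c + r), HasDerivAt A' (ν ^ 2 • A x) x) :
    A (c - r) + A (c + r) = (2 * cosh (ν * r)) • A c := by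
  let u : ℝ → E := fun t => A (c + t) + A (c - t)
  have hadd : ∀ t ∈ Set.Ioo (-r) r, c + t ∈ Set.Ioo (c - r) (c + r) := fun t ht =>
    ⟨by linarith [ht.1], by linarith [ht.2]⟩
  have hsub : ∀ t ∈ Set.Ioo (-r) r, c - t ∈ Set.Ioo (c - r) (c + r) := fun t ht =>
    ⟨by linarith [ht.2], by linarith [ht.1]⟩
  have hopen : Set.EqOn u (fun t => cosh (ν * t) • u 0) (Set.Ioo (-r) r) := by
    refine eqOn_cosh_smul_of_hasDerivAt (u' := fun t => A' (c + t) - A' (c - t))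
      (fun t ht => ?_) (fun t ht => ?_) (by simp)
    · simpa [sub_eq_add_neg] using! ((hA' _ (hadd t ht)).comp_const_add c t).add
        ((hA' _ (hsub t ht)).comp_const_sub c t)
    · simpa [u, smul_add] using! ((hA'' _ (hadd t ht)).comp_const_add c t).sub
        ((hA'' _ (hsub t ht)).comp_const_sub c t)
  have hu : ContinuousOn u (Set.Icc (-r) r) :=
    (hA.comp (by fun_prop) fun t ht => ⟨by linarith [ht.1], by linarith [ht.2]⟩).add
      (hA.comp (by fun_prop) fun t ht => ⟨by linarith [ht.2], by linarith [ht.1]⟩)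
  have hclosed : Set.EqOn u (fun t => cosh (ν * t) • u 0) (Set.Icc (-r) r) :=
    hopen.of_subset_closure hu (by fun_prop) Set.Ioo_subset_Icc_self
      (closure_Ioo (by linarith)).ge
  calc A (c - r) + A (c + r) = u r := add_comm _ _
    _ = cosh (ν * r) • u 0 := hclosed ⟨by linarith, le_rfl⟩
    _ = (2 * cosh (ν * r)) • A c := by simp only [u, add_zero, sub_zero]; module

end HyperbolicODE

lemma exp_abs_le_two_mul_cosh (x : ℝ) : exp |x| ≤ 2 * cosh x := by
  rw [cosh_eq]
  linarith [exp_abs_le x]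

lemma hasSum_int_ite_pow_natAbs {r : ℝ} (hr₀ : 0 ≤ r) (hr₁ : r < 1) :
    HasSum (fun n : ℤ => if n = 0 then 0 else r ^ n.natAbs) (2 * (r / (1 - r))) := by
  have hgeom : HasSum (fun n : ℕ => r ^ (n + 1)) (r / (1 - r)) := by
    simpa only [pow_succ', div_eq_mul_inv] using (hasSum_geometric_of_lt_one hr₀ hr₁).mul_left r
  have hpos (n : ℕ) : (if (n + 1 : ℤ) = 0 then 0 else r ^ (n + 1 : ℤ).natAbs) = r ^ (n + 1) := by
    rw [if_neg (by lia)]; congr 1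
  have hneg (n : ℕ) :
      (if -(n + 1 : ℤ) = 0 then 0 else r ^ (-(n + 1 : ℤ)).natAbs) = r ^ (n + 1) := by
    simp only [neg_eq_zero, Int.natAbs_neg, hpos]
  simpa [two_mul] using HasSum.of_add_one_of_neg_add_one
    (f := fun n : ℤ => if n = 0 then 0 else r ^ n.natAbs)
    (by simpa only [hpos] using hgeom) (by simpa only [hneg] using hgeom)

section CircleModes

variable {T : ℝ} (hT : 0 < T)

/-- The `n`-th Fourier mode of `u` along the circle `{x} × ℝ / Tℤ`, as a function of `x`. The
circle is represented by the fundamental domain `(0, T]`; `u` need not be periodic. -/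
noncomputable def circleMode (u : ℝ × ℝ → ℝ) (n : ℤ) (x : ℝ) : ℂ :=
  fourierCoeffOn hT (fun y => (u (x, y) : ℂ)) n

lemma continuousOn_circleMode {s : Set ℝ} {u : ℝ × ℝ → ℝ}
    (hu : ContinuousOn u (s ×ˢ Set.univ)) (n : ℤ) : ContinuousOn (circleMode hT u n) s :=
  continuousOn_fourierCoeffOn hT (Complex.continuous_ofReal.comp_continuousOn hu) n

section OpenStrip

variable {s : Set ℝ} (hs : IsOpen s) {u : ℝ × ℝ → ℝ}
include hs

lemma differentiableAt_of_contDiffOn_strip (hu : ContDiffOn ℝ 1 u (s ×ˢ Set.univ)) {x : ℝ}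
    (hx : x ∈ s) (y : ℝ) : DifferentiableAt ℝ u (x, y) :=
  (hu.contDiffAt ((hs.prod isOpen_univ).mem_nhds ⟨hx, trivial⟩)).differentiableAt one_ne_zero

lemma hasDerivAt_circleMode (hu : ContDiffOn ℝ 1 u (s ×ˢ Set.univ)) (n : ℤ) {x : ℝ}
    (hx : x ∈ s) : HasDerivAt (circleMode hT u n) (circleMode hT (partialFst u) n x) x := by
  have hu' : ContDiffOn ℝ 0 (partialFst u) (s ×ˢ Set.univ) :=
    contDiffOn_partialFst (hs.prod isOpen_univ) (by simpa using hu)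
  exact hasDerivAt_fourierCoeffOn hT (F := fun p => (u p : ℂ)) hs
    (Complex.continuous_ofReal.comp_continuousOn hu.continuousOn)
    (Complex.continuous_ofReal.comp_continuousOn hu'.continuousOn)
    (fun x hx y =>
      (hasDerivAt_partialFst (differentiableAt_of_contDiffOn_strip hs hu hx y)).ofReal_comp) n hx

lemma circleMode_partialSnd (hu : ContDiffOn ℝ 1 u (s ×ˢ Set.univ)) (n : ℤ) {x : ℝ}
    (hx : x ∈ s) (hper : ∀ y, u (x, y + T) = u (x, y)) :
    circleMode hT (partialSnd u) n x = 2 * π * Complex.I * n / T * circleMode hT u n x := by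
  have hu' : ContDiffOn ℝ 0 (partialSnd u) (s ×ˢ Set.univ) :=
    contDiffOn_partialSnd (hs.prod isOpen_univ) (by simpa using hu)
  have hcont : Continuous fun y => ((partialSnd u (x, y) : ℝ) : ℂ) :=
    Complex.continuous_ofReal.comp (continuous_slice_of_continuousOn_prod hu'.continuousOn hx)
  have hends : (u (x, T) : ℂ) = u (x, 0) := by simpa using hper 0
  have hderiv (y : ℝ) :
      HasDerivAt (fun y => (u (x, y) : ℂ)) ((partialSnd u (x, y) : ℝ) : ℂ) y :=
    (hasDerivAt_partialSnd (differentiableAt_of_contDiffOn_strip hs hu hx y)).ofReal_comp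
  simpa using! fourierCoeffOn_deriv_of_eq_endpoints hT (fun y _ => hderiv y)
    (hcont.intervalIntegrable 0 T) hends n

lemma circleMode_partialFst_partialFst_of_harmonicOn (hu : HarmonicOn u (s ×ˢ Set.univ)) (n : ℤ)
    {x : ℝ} (hx : x ∈ s) (hper : ∀ y, u (x, y + T) = u (x, y)) :
    circleMode hT (partialFst (partialFst u)) n x =
      (2 * π * n / T) ^ 2 • circleMode hT u n x := by
  have hu1 : ContDiffOn ℝ 1 u (s ×ˢ Set.univ) := hu.1.of_le one_le_two
  have huy : ContDiffOn ℝ 1 (partialSnd u) (s ×ˢ Set.univ) :=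
    contDiffOn_partialSnd (hs.prod isOpen_univ) (by simpa [one_add_one_eq_two] using hu.1)
  have hlap (y : ℝ) : ((partialFst (partialFst u) (x, y) : ℝ) : ℂ) =
      -1 * (partialSnd (partialSnd u) (x, y) : ℝ) := by
    have := hu.2 (x, y) ⟨hx, trivial⟩
    rw [laplacian_eq_partialFst_add_partialSnd, add_eq_zero_iff_eq_neg] at this
    simp [this]
  calc circleMode hT (partialFst (partialFst u)) n x
      = -1 * circleMode hT (partialSnd (partialSnd u)) n x := by
        simp only [circleMode, hlap, fourierCoeffOn.const_mul]
    _ = -1 * (2 * π * Complex.I * n / T * (2 * π * Complex.I * n / T * circleMode hT u n x)) := by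
        rw [circleMode_partialSnd hT hs huy n hx (partialSnd_add_period hper),
          circleMode_partialSnd hT hs hu1 n hx hper]
    _ = (2 * π * n / T) ^ 2 • circleMode hT u n x := by
        rw [Complex.real_smul]
        push_cast
        linear_combination (-(2 * π * n / T : ℂ) ^ 2 * circleMode hT u n x) * Complex.I_sq

end OpenStrip

end CircleModes

section Cylinder

variable {T L : ℝ} {f : ℝ → ℝ} {h : ℝ × ℝ → ℝ} (hT : 0 < T) (hL : 0 < L)
  (hcont : ContinuousOn h (Set.Icc 0 L ×ˢ Set.univ))
  (hper : ∀ x ∈ Set.Icc 0 L, ∀ y, h (x, y + T) = h (x, y))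
  (hharm : HarmonicOn h (Set.Ioo 0 L ×ˢ Set.univ))
include hL hcont hper hharm

lemma circleMode_zero_add_circleMode (n : ℤ) :
    circleMode hT h n 0 + circleMode hT h n L =
      (2 * cosh (n * (π * L / T))) • circleMode hT h n (L / 2) := by
  have hx1 : ContDiffOn ℝ 1 (partialFst h) (Set.Ioo 0 L ×ˢ Set.univ) :=
    contDiffOn_partialFst (isOpen_Ioo.prod isOpen_univ)
      (by simpa [one_add_one_eq_two] using hharm.1)
  have hode := add_eq_two_mul_cosh_smul_of_hasDerivAt (A := circleMode hT h n)
    (A' := circleMode hT (partialFst h) n) (ν := 2 * π * n / T) (c := L / 2) (half_pos hL)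
  rw [sub_self, add_halves] at hode
  rw [hode (continuousOn_circleMode hT hcont n)
    (fun x hx => hasDerivAt_circleMode hT isOpen_Ioo (hharm.1.of_le one_le_two) n hx)
    (fun x hx => circleMode_partialFst_partialFst_of_harmonicOn hT isOpen_Ioo hharm n hx
      (hper x (Set.Ioo_subset_Icc_self hx)) ▸ hasDerivAt_circleMode hT isOpen_Ioo hx1 n hx)]
  ring_nf

lemma cosh_smul_circleMode_half (havg : ∀ y, h (0, y) + h (L, y) = 2 * f y) (n : ℤ) :
    cosh (n * (π * L / T)) • circleMode hT h n (L / 2) =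
      fourierCoeffOn hT (fun y => (f y : ℂ)) n := by
  have hint : ∀ x ∈ Set.Icc 0 L, IntervalIntegrable (fun y => (h (x, y) : ℂ)) volume 0 T :=
    fun x hx => (Complex.continuous_ofReal.comp
      (continuous_slice_of_continuousOn_prod hcont hx)).intervalIntegrable 0 T
  have hboundary : circleMode hT h n 0 + circleMode hT h n L =
      2 * fourierCoeffOn hT (fun y => (f y : ℂ)) n := by
    rw [circleMode, circleMode, ← fourierCoeffOn_add hT (hint 0 (Set.left_mem_Icc.2 hL.le))
      (hint L (Set.right_mem_Icc.2 hL.le)), ← fourierCoeffOn.const_mul]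
    exact_mod_cast congrArg (fun g : ℝ → ℝ => fourierCoeffOn hT (fun y => (g y : ℂ)) n)
      (funext havg)
  rw [circleMode_zero_add_circleMode hT hL hcont hper hharm, mul_smul, ofNat_smul_eq_nsmul,
    nsmul_eq_mul] at hboundary
  exact mul_left_cancel₀ two_ne_zero hboundary

lemma norm_circleMode_half_le {M : ℝ} (hfM : ∀ y, |f y| ≤ M) (hf : ∫ y in 0..T, f y = 0)
    (havg : ∀ y, h (0, y) + h (L, y) = 2 * f y) (n : ℤ) :
    ‖circleMode hT h n (L / 2)‖ ≤
      2 * M * if n = 0 then 0 else exp (-(π * L / T)) ^ n.natAbs := by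
  have hmode := cosh_smul_circleMode_half hT hL hcont hper hharm havg n
  split_ifs with hn
  · have hzero : circleMode hT h n (L / 2) = 0 := by
      simpa [hn, fourierCoeffOn_zero_eq_integral, intervalIntegral.integral_ofReal, hf] using hmode
    simp [hzero]
  set x : ℝ := n * (π * L / T)
  have hcosh : cosh x * ‖circleMode hT h n (L / 2)‖ ≤ M := by
    rw [← Real.norm_of_nonneg (cosh_pos x).le, ← norm_smul, hmode]
    exact norm_fourierCoeffOn_le hT (fun y _ => by simpa using hfM y) n
  have hexp : exp (-(π * L / T)) ^ n.natAbs = (exp |x|)⁻¹ := by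
    rw [← exp_nat_mul, ← exp_neg, abs_mul, abs_of_pos (by positivity : 0 < π * L / T),
      Nat.cast_natAbs, Int.cast_abs, mul_neg]
  rw [hexp, ← div_eq_mul_inv, le_div_iff₀ (exp_pos _)]
  calc ‖circleMode hT h n (L / 2)‖ * exp |x|
      ≤ ‖circleMode hT h n (L / 2)‖ * (2 * cosh x) := by gcongr; exact exp_abs_le_two_mul_cosh x
    _ = 2 * (cosh x * ‖circleMode hT h n (L / 2)‖) := by ring
    _ ≤ 2 * M := by gcongr

end Cylinder

theorem central_circle_decay_general {T L M : ℝ} {f : ℝ → ℝ} {h : ℝ × ℝ → ℝ} (hT : 0 < T)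
    (hL : 0 < L) (hfM : ∀ y, |f y| ≤ M) (hf : ∫ y in 0..T, f y = 0)
    (hcont : ContinuousOn h (Set.Icc 0 L ×ˢ Set.univ))
    (hper : ∀ x ∈ Set.Icc 0 L, ∀ y, h (x, y + T) = h (x, y))
    (hharm : HarmonicOn h (Set.Ioo 0 L ×ˢ Set.univ))
    (havg : ∀ y, h (0, y) + h (L, y) = 2 * f y) (y : ℝ) :
    |h (L / 2, y)| ≤ 4 / (1 - exp (-(π * L / T))) * M * exp (-(π * L / T)) := by
  have hmid : L / 2 ∈ Set.Icc 0 L := ⟨by positivity, half_le_self hL.le⟩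
  have hq : exp (-(π * L / T)) < 1 := exp_lt_one_iff.2 (neg_lt_zero.2 (by positivity))
  have hbound : ‖(h (L / 2, y) : ℂ)‖ ≤
      2 * M * (2 * (exp (-(π * L / T)) / (1 - exp (-(π * L / T))))) :=
    norm_le_of_norm_fourierCoeffOn_le hT
      (Complex.continuous_ofReal.comp (continuous_slice_of_continuousOn_prod hcont hmid))
      (fun y => by simp [hper _ hmid])
      ((hasSum_int_ite_pow_natAbs (exp_pos _).le hq).mul_left (2 * M))
      (norm_circleMode_half_le hT hL hcont hper hharm hfM hf havg) y
  rw [Complex.norm_real, norm_eq_abs] at hbound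
  exact hbound.trans_eq (by ring)

/-- There is a universal constant `K₀ > 0` such that any harmonic function on the
cylinder `[0,L] × ℝ` (of circumference `2π`, i.e. `2π`-periodic in the second variable)
with identical boundary data `f` on both boundary circles, where `f` has sup-norm at
most `M` and mean zero, satisfies `|h(L/2, y)| ≤ K₀ · M · e^{-L/2}` on the central circle. -/
theorem central_circle_decay :
    ∃ K₀ : ℝ, 0 < K₀ ∧
      ∀ (L M : ℝ) (f : ℝ → ℝ) (h : ℝ × ℝ → ℝ),
        1 < L → 0 ≤ M →
        Continuous f →
        (∀ y : ℝ, f (y + 2 * π) = f y) →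
        (∀ y : ℝ, |f y| ≤ M) →
        (∫ y in (0 : ℝ)..(2 * π), f y) = 0 →
        ContinuousOn h (Set.Icc 0 L ×ˢ (Set.univ : Set ℝ)) →
        (∀ x ∈ Set.Icc (0 : ℝ) L, ∀ y : ℝ, h (x, y + 2 * π) = h (x, y)) →
        HarmonicOn h (Set.Ioo 0 L ×ˢ (Set.univ : Set ℝ)) →
        (∀ y : ℝ, h (0, y) = f y) →
        (∀ y : ℝ, h (L, y) = f y) →
        ∀ y : ℝ, |h (L / 2, y)| ≤ K₀ * M * Real.exp (-L / 2) := by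
  have hgap : 0 < 1 - exp (-1 / 2) := sub_pos.2 (exp_lt_one_iff.2 (by norm_num))
  refine ⟨4 / (1 - exp (-1 / 2)), by positivity,
    fun L M f h hL hM _ _ hfM hf hcont hper hharm h0 h1 y => ?_⟩
  have hdecay := central_circle_decay_general two_pi_pos (by linarith) hfM hf hcont hper hharm
    (fun y => by rw [h0, h1, two_mul]) y
  rw [show -(π * L / (2 * π)) = -L / 2 by field_simp] at hdecay
  exact hdecay.trans (by gcongr)
end

section
/- Let U ⊆ ℝ² be an open connected set whose intersection with the x-axis ℝ × {0} is nonempty, and let h : U → ℝ be harmonic on U. Suppose that for every point (x, 0) ∈ U one has h(x, 0) = 0 and ∂h/∂y (x, 0) = 0. Then h is identically zero on U. -/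
open Real

/-!
Write `f` for `u` transported to `ℂ`. Harmonicity makes the complex gradient `f_x - i f_y`
holomorphic, so by the identity theorem it vanishes identically as soon as its zeros accumulate, and
then `u` is constant. On the axis the normal derivative vanishes by assumption, while the tangential
one vanishes because `u` is real-analytic and its zeros accumulate along the axis.
-/

open InnerProductSpace Set Filter Topology

section PartialDerivatives

variable {𝕜 E F : Type*} [NontriviallyNormedField 𝕜]
  [NormedAddCommGroup E] [NormedSpace 𝕜 E] [NormedAddCommGroup F] [NormedSpace 𝕜 F]

theorem deriv_deriv_comp_of_hasDerivAt_const {f : E → F} {c : 𝕜 → E} {v : E} {t : 𝕜}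
    (hf : ContDiffAt 𝕜 2 f (c t)) (hc : ∀ s, HasDerivAt c v s) :
    deriv (fun s => deriv (fun s' => f (c s')) s) t = iteratedFDeriv 𝕜 2 f (c t) ![v, v] := by
  have hderiv : (fun s => deriv (fun s' => f (c s')) s) =ᶠ[𝓝 t] fun s => fderiv 𝕜 f (c s) v := by
    filter_upwards [(hc t).continuousAt.eventually (hf.eventually (by simp))] with s hs
    exact ((hs.differentiableAt two_ne_zero).hasFDerivAt.comp_hasDerivAt s (hc s)).deriv
  have hfderiv : DifferentiableAt 𝕜 (fderiv 𝕜 f) (c t) :=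
    (hf.fderiv_right (m := 1) (by norm_num)).differentiableAt one_ne_zero
  rw [hderiv.deriv_eq, iteratedFDeriv_two_apply]
  simpa using ((hfderiv.hasFDerivAt.comp_hasDerivAt t (hc t)).clm_apply
    (hasDerivAt_const t v)).deriv

theorem fderiv_eq_zero_iff_partial_deriv_eq_zero {f : 𝕜 × 𝕜 → F} {p : 𝕜 × 𝕜}
    (hf : DifferentiableAt 𝕜 f p) :
    fderiv 𝕜 f p = 0 ↔
      deriv (fun x => f (x, p.2)) p.1 = 0 ∧ deriv (fun y => f (p.1, y)) p.2 = 0 := by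
  have hx : deriv (fun x => f (x, p.2)) p.1 = fderiv 𝕜 f p (1, 0) :=
    (hf.hasFDerivAt.comp_hasDerivAt p.1 (hasFDerivAt_prodMk_left p.1 p.2).hasDerivAt).deriv
  have hy : deriv (fun y => f (p.1, y)) p.2 = fderiv 𝕜 f p (0, 1) :=
    (hf.hasFDerivAt.comp_hasDerivAt p.2 (hasFDerivAt_prodMk_right p.1 p.2).hasDerivAt).deriv
  rw [hx, hy]
  refine ⟨fun h => by simp [h], fun ⟨hx_zero, hy_zero⟩ => ?_⟩
  ext <;> simpa

end PartialDerivatives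

theorem complex_partial_eq_zero_iff (L : ℂ →L[ℝ] ℝ) :
    (L 1 : ℂ) - Complex.I * L Complex.I = 0 ↔ L = 0 := by
  refine ⟨fun h => ?_, fun h => by simp [h]⟩
  have hre : L 1 = 0 := by simpa using congrArg Complex.re h
  have him : L Complex.I = 0 := by simpa using congrArg Complex.im h
  exact ContinuousLinearMap.coe_injective (Complex.basisOneI.ext (by simp [hre, him]))

theorem fderiv_eqOn_zero_of_frequently_of_harmonicOnNhd {f : ℂ → ℝ} {V : Set ℂ}
    (hf : HarmonicOnNhd f V) (hV : IsPreconnected V) {z₀ : ℂ} (hz₀ : z₀ ∈ V)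
    (hfreq : ∃ᶠ z in 𝓝[≠] z₀, fderiv ℝ f z = 0) :
    EqOn (fderiv ℝ f) 0 V := by
  have hholo : AnalyticOnNhd ℂ
      (fun z => (fderiv ℝ f z 1 : ℂ) - Complex.I * fderiv ℝ f z Complex.I) V :=
    fun z hz => HarmonicAt.analyticAt_complex_partial (hf z hz)
  have hzero := hholo.eqOn_zero_of_preconnected_of_frequently_eq_zero hV hz₀
    (hfreq.mono fun z hz => (complex_partial_eq_zero_iff _).2 hz)
  exact fun z hz => (complex_partial_eq_zero_iff _).1 (hzero hz)

section RealPlane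

variable {u : ℝ × ℝ → ℝ} {U : Set (ℝ × ℝ)} {p : ℝ × ℝ}

theorem laplacian_eq_iteratedFDeriv (hu : ContDiffAt ℝ 2 u p) :
    laplacian u p =
      iteratedFDeriv ℝ 2 u p ![(1, 0), (1, 0)] + iteratedFDeriv ℝ 2 u p ![(0, 1), (0, 1)] :=
  congrArg₂ (· + ·)
    (deriv_deriv_comp_of_hasDerivAt_const (c := fun x => (x, p.2)) hu
      fun x => (hasFDerivAt_prodMk_left x p.2).hasDerivAt)
    (deriv_deriv_comp_of_hasDerivAt_const (c := fun y => (p.1, y)) hu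
      fun y => (hasFDerivAt_prodMk_right p.1 y).hasDerivAt)

theorem laplacian_comp_equivRealProdCLM {z : ℂ}
    (hu : ContDiffAt ℝ 2 u (Complex.equivRealProdCLM z)) :
    Laplacian.laplacian (u ∘ Complex.equivRealProdCLM) z =
      laplacian u (Complex.equivRealProdCLM z) := by
  have hcomp := Complex.equivRealProdCLM.iteratedFDerivWithin_comp_right u uniqueDiffOn_univ
    (mem_univ (Complex.equivRealProdCLM z)) 2
  simp only [preimage_univ, iteratedFDerivWithin_univ] at hcomp
  rw [laplacian_eq_iteratedFDeriv hu, laplacian_eq_iteratedFDeriv_complexPlane]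
  simp only [hcomp, ContinuousMultilinearMap.compContinuousLinearMap_apply]
  congr 2 <;> ext i <;> fin_cases i <;> simp

theorem HarmonicOn.harmonicOnNhd_comp_equivRealProdCLM (hu : HarmonicOn u U) (hU : IsOpen U) :
    HarmonicOnNhd (u ∘ Complex.equivRealProdCLM) (Complex.equivRealProdCLM ⁻¹' U) := by
  have hsmooth : ∀ p ∈ U, ContDiffAt ℝ 2 u p := fun p hp => hu.1.contDiffAt (hU.mem_nhds hp)
  refine fun z hz => ⟨(hsmooth _ hz).comp z Complex.equivRealProdCLM.contDiff.contDiffAt, ?_⟩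
  filter_upwards [(hU.preimage Complex.equivRealProdCLM.continuous).mem_nhds hz] with w hw
  exact (laplacian_comp_equivRealProdCLM (hsmooth _ hw)).trans (hu.2 _ hw)

theorem HarmonicOn.analyticOnNhd (hu : HarmonicOn u U) (hU : IsOpen U) :
    AnalyticOnNhd ℝ u U := fun p hp => by
  have hf : AnalyticAt ℝ (u ∘ Complex.equivRealProdCLM) (Complex.equivRealProdCLM.symm p) :=
    HarmonicAt.analyticAt (hu.harmonicOnNhd_comp_equivRealProdCLM hU _ (by simpa using hp))
  have hcomp := hf.comp (Complex.equivRealProdCLM.symm.analyticAt p)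
  rwa [Function.comp_assoc, Complex.equivRealProdCLM.self_comp_symm, Function.comp_id] at hcomp

theorem HarmonicOn.fderiv_eqOn_zero_of_frequently (hu : HarmonicOn u U) (hU : IsOpen U)
    (hconn : IsPreconnected U) (hp : p ∈ U) (hfreq : ∃ᶠ q in 𝓝[≠] p, fderiv ℝ u q = 0) :
    EqOn (fderiv ℝ u) 0 U := by
  let e := Complex.equivRealProdCLM
  have hgrad (z : ℂ) : fderiv ℝ (u ∘ e) z = 0 ↔ fderiv ℝ u (e z) = 0 := by
    rw [e.comp_right_fderiv]
    refine ⟨fun h => ContinuousLinearMap.ext fun v => ?_, fun h => by rw [h]; rfl⟩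
    simpa [e] using DFunLike.congr_fun h (e.symm v)
  obtain ⟨z₀, rfl⟩ := e.surjective p
  have hfreq_comp : ∃ᶠ z in 𝓝[≠] z₀, fderiv ℝ (u ∘ e) z = 0 := by
    simp only [hgrad]
    exact frequently_map.1 (e.toHomeomorph.map_punctured_nhds_eq z₀ ▸ hfreq)
  have hzero := fderiv_eqOn_zero_of_frequently_of_harmonicOnNhd
    (hu.harmonicOnNhd_comp_equivRealProdCLM hU) (e.toHomeomorph.isPreconnected_preimage.2 hconn)
    hp hfreq_comp
  intro q hq
  obtain ⟨z, rfl⟩ := e.surjective q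
  exact (hgrad z).1 (hzero hq)

theorem HarmonicOn.eq_of_frequently_fderiv_eq_zero (hu : HarmonicOn u U) (hU : IsOpen U)
    (hconn : IsPreconnected U) (hp : p ∈ U) (hfreq : ∃ᶠ q in 𝓝[≠] p, fderiv ℝ u q = 0)
    {q : ℝ × ℝ} (hq : q ∈ U) : u q = u p :=
  hU.is_const_of_fderiv_eq_zero hconn (hu.analyticOnNhd hU).differentiableOn
    (hu.fderiv_eqOn_zero_of_frequently hU hconn hp hfreq) hq hp

end RealPlane

theorem harmonic_unique_continuation_general {U : Set (ℝ × ℝ)} (hU : IsOpen U)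
    (hconn : IsPreconnected U) {h : ℝ × ℝ → ℝ} (hharm : HarmonicOn h U) {x₀ y₀ : ℝ}
    (hmem : (x₀, y₀) ∈ U) (hval : ∃ᶠ x in 𝓝[≠] x₀, h (x, y₀) = 0)
    (hnormal : ∃ᶠ x in 𝓝[≠] x₀, deriv (fun y => h (x, y)) y₀ = 0) :
    ∀ p ∈ U, h p = 0 := by
  have hline : HasDerivAt (fun x => (x, y₀)) (1, 0) x₀ :=
    (hasFDerivAt_prodMk_left x₀ y₀).hasDerivAt
  have hanalytic := hharm.analyticOnNhd hU
  have haxis : ∀ᶠ x in 𝓝 x₀, h (x, y₀) = 0 :=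
    ((hanalytic _ hmem).comp₂ analyticAt_id analyticAt_const).frequently_zero_iff_eventually_zero.1
      hval
  have hgrad : ∃ᶠ x in 𝓝[≠] x₀, fderiv ℝ h (x, y₀) = 0 := by
    have hnear : ∀ᶠ x in 𝓝 x₀, (x, y₀) ∈ U := hline.continuousAt.eventually (hU.mem_nhds hmem)
    refine (hnormal.and_eventually
      ((haxis.eventually_nhds.and hnear).filter_mono nhdsWithin_le_nhds)).mono ?_
    rintro x ⟨hy, hx, hxU⟩
    refine (fderiv_eq_zero_iff_partial_deriv_eq_zero
      (hanalytic _ hxU).differentiableAt).2 ⟨?_, hy⟩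
    exact (EventuallyEq.deriv_eq hx).trans (deriv_const x 0)
  intro p hp
  rw [hharm.eq_of_frequently_fderiv_eq_zero hU hconn hmem
    ((hline.tendsto_nhdsNE (by simp)).frequently hgrad) hp]
  exact haxis.self_of_nhds

/-- Unique continuation: a harmonic function on an open connected set `U ⊆ ℝ²` meeting
the x-axis, which vanishes to first order along the x-axis (both the value and the
normal derivative `∂h/∂y` vanish at every point of `U` on the x-axis), vanishes
identically on `U`. -/
theorem harmonic_unique_continuation (U : Set (ℝ × ℝ)) (hU : IsOpen U)
    (hconn : IsConnected U) (hne : (U ∩ {p : ℝ × ℝ | p.2 = 0}).Nonempty)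
    (h : ℝ × ℝ → ℝ) (hharm : HarmonicOn h U)
    (hval : ∀ p ∈ U, p.2 = 0 → h p = 0)
    (hnormal : ∀ p ∈ U, p.2 = 0 → deriv (fun y => h (p.1, y)) p.2 = 0) :
    ∀ p ∈ U, h p = 0 := by
  obtain ⟨⟨x₀, y₀⟩, hmem, hy₀⟩ := hne
  obtain rfl : y₀ = 0 := hy₀
  have hnear : ∀ᶠ x in 𝓝[≠] x₀, (x, (0 : ℝ)) ∈ U :=
    mem_nhdsWithin_of_mem_nhds ((hU.preimage (Continuous.prodMk_left 0)).mem_nhds hmem)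
  exact harmonic_unique_continuation_general hU hconn.isPreconnected hharm hmem
    (hnear.mono fun x hx => hval _ hx rfl).frequently
    (hnear.mono fun x hx => hnormal _ hx rfl).frequently
end
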